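/- Let f : [a,b] → ℝ be locally Lipschitz, let x̄ ∈ argmin_{[a,b]} f, and suppose f is κ-quasar-convex with respect to x̄ for some κ ∈ (0,1]. Then f is unimodal: f is nonincreasing on [a, x̄] and nondecreasing on [x̄, b]. Moreover, every Clarke critical point of f in [a,b] is a global minimizer of f on [a,b]. -/

import Mathlib

/-!
With `m = f xbar`, quasar-convexity says that moving from `y` a fraction `t` of the way towards
`xbar` decreases `f` by at least `κ * t * (f y - m) ≥ 0`. Monotonicity on both sides of `xbar` is
immediate from this.

For a critical point `x` with `f x > m`, take the direction `d = xbar - x`. For `y` near `x` and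
small `t > 0`, the point `y + t * d` is the fraction `t * r` of the way from `y` to `xbar`, where
`r = (xbar - x) / (xbar - y) → 1`. Hence the Clarke difference quotient is at most
`-κ * r * (f y - m) → -κ * (f x - m) < 0`, so the Clarke derivative in direction `d` is negative,
contradicting criticality (`clarkeDerivOn_lt_zero`). As `y + t * d` stays in `[a, b]`, the values
of `f` outside the interval play no role, and the local Lipschitz bound keeps the quotients bounded
below, so that the real-valued `limsup` is not a junk value.
-/

open Set Filter Topology

/-- Clarke directional derivative of `f : ℝ → ℝ` at `x` in direction `d`, relative to the
set `s` (the effective domain `[a,b]`):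
`f°(x; d) = limsup_{y → x in s, t ↓ 0} (f (y + t d) - f y) / t`. -/
noncomputable def clarkeDerivOn (f : ℝ → ℝ) (s : Set ℝ) (x d : ℝ) : ℝ :=
  Filter.limsup (fun p : ℝ × ℝ => (f (p.1 + p.2 * d) - f p.1) / p.2)
    ((𝓝[s] x) ×ˢ (𝓝[>] (0:ℝ)))

/-- Clarke subdifferential of `f : ℝ → ℝ` at `x`, relative to the set `s`. -/
def clarkeSubdiffOn (f : ℝ → ℝ) (s : Set ℝ) (x : ℝ) : Set ℝ :=
  {v | ∀ d, v * d ≤ clarkeDerivOn f s x d}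

/-- The Clarke derivative at a non-minimizer is negative in the direction of the minimizer. -/
theorem clarkeDerivOn_lt_zero (a b : ℝ) (f : ℝ → ℝ) (xbar : ℝ) (hxbar : xbar ∈ Icc a b)
    (κ : ℝ) (hκ : 0 < κ)
    (hqc : ∀ x ∈ Icc a b, ∀ t ∈ Icc (0:ℝ) 1,
      f (t * xbar + (1 - t) * x) ≤ κ * t * f xbar + (1 - κ * t) * f x)
    (x : ℝ) (hx : x ∈ Icc a b)
    (hlip : ∃ (K : NNReal) (U : Set ℝ), U ∈ 𝓝[Icc a b] x ∧ LipschitzOnWith K f U)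
    (hlt : f xbar < f x) :
    clarkeDerivOn f (Icc a b) x (xbar - x) < 0 := by
  obtain ⟨K, U, hU, hK⟩ := hlip
  have hne : xbar - x ≠ 0 := by
    intro h
    rw [sub_eq_zero.mp h] at hlt
    exact lt_irrefl _ hlt
  have hxU : x ∈ U := mem_of_mem_nhdsWithin hx hU
  have hcont : Tendsto f (𝓝[Icc a b] x) (𝓝 (f x)) :=
    ((hK.continuousOn x hxU).mono_of_mem_nhdsWithin hU).tendsto
  haveI : (𝓝[Icc a b] x).NeBot := mem_closure_iff_nhdsWithin_neBot.mp (subset_closure hx)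
  have h1 : Tendsto (fun p : ℝ × ℝ => p.1) ((𝓝[Icc a b] x) ×ˢ (𝓝[>] (0:ℝ))) (𝓝[Icc a b] x) :=
    tendsto_fst
  have h1' := h1.mono_right nhdsWithin_le_nhds
  have h2 : Tendsto (fun p : ℝ × ℝ => p.2) ((𝓝[Icc a b] x) ×ˢ (𝓝[>] (0:ℝ))) (𝓝[>] (0:ℝ)) :=
    tendsto_snd
  have h2' := h2.mono_right nhdsWithin_le_nhds
  have hr : Tendsto (fun p : ℝ × ℝ => (xbar - x) / (xbar - p.1))
      ((𝓝[Icc a b] x) ×ˢ (𝓝[>] (0:ℝ))) (𝓝 1) := by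
    have := (tendsto_const_nhds (x := xbar - x)).div
      ((tendsto_const_nhds (x := xbar)).sub h1') hne
    rwa [div_self hne] at this
  have hne' : ∀ᶠ p : ℝ × ℝ in (𝓝[Icc a b] x) ×ˢ (𝓝[>] (0:ℝ)), xbar - p.1 ≠ 0 :=
    ((tendsto_const_nhds (x := xbar)).sub h1').eventually_ne hne
  have hrpos := hr.eventually (lt_mem_nhds (zero_lt_one (α := ℝ)))
  have htr : ∀ᶠ p : ℝ × ℝ in (𝓝[Icc a b] x) ×ˢ (𝓝[>] (0:ℝ)),
      p.2 * ((xbar - x) / (xbar - p.1)) < 1 := by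
    have := h2'.mul hr
    rw [zero_mul] at this
    exact this.eventually (gt_mem_nhds zero_lt_one)
  have hgap : ∀ᶠ p : ℝ × ℝ in (𝓝[Icc a b] x) ×ˢ (𝓝[>] (0:ℝ)),
      κ * (f x - f xbar) / 2 < κ * ((xbar - x) / (xbar - p.1)) * (f p.1 - f xbar) := by
    have := (hr.const_mul κ).mul ((hcont.comp h1).sub_const (f xbar))
    refine this.eventually (lt_mem_nhds ?_)
    have : 0 < κ * (f x - f xbar) := mul_pos hκ (sub_pos.mpr hlt)
    linarith
  have hpos : ∀ᶠ p : ℝ × ℝ in (𝓝[Icc a b] x) ×ˢ (𝓝[>] (0:ℝ)), 0 < p.2 :=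
    h2 self_mem_nhdsWithin
  have hmem : ∀ᶠ p : ℝ × ℝ in (𝓝[Icc a b] x) ×ˢ (𝓝[>] (0:ℝ)), p.1 ∈ Icc a b :=
    h1 self_mem_nhdsWithin
  have hrepr : ∀ p : ℝ × ℝ, xbar - p.1 ≠ 0 → p.1 + p.2 * (xbar - x) =
      p.2 * ((xbar - x) / (xbar - p.1)) * xbar +
        (1 - p.2 * ((xbar - x) / (xbar - p.1))) * p.1 := by
    intro p hp
    field_simp
    ring
  have hmem' : ∀ᶠ p : ℝ × ℝ in (𝓝[Icc a b] x) ×ˢ (𝓝[>] (0:ℝ)),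
      p.1 + p.2 * (xbar - x) ∈ Icc a b := by
    filter_upwards [hne', hrpos, htr, hpos, hmem] with p p1 p2 p3 p4 p5
    rw [hrepr p p1]
    exact convex_Icc a b hxbar p5 (mul_pos p4 p2).le (by linarith) (by ring)
  have htend : Tendsto (fun p : ℝ × ℝ => p.1 + p.2 * (xbar - x))
      ((𝓝[Icc a b] x) ×ˢ (𝓝[>] (0:ℝ))) (𝓝[Icc a b] x) := by
    refine tendsto_nhdsWithin_iff.mpr ⟨?_, hmem'⟩
    have := h1'.add (h2'.mul_const (xbar - x))
    simpa using this
  have hlow : ∀ᶠ p : ℝ × ℝ in (𝓝[Icc a b] x) ×ˢ (𝓝[>] (0:ℝ)),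
      -(K * |xbar - x|) ≤ (f (p.1 + p.2 * (xbar - x)) - f p.1) / p.2 := by
    filter_upwards [htend hU, h1 hU, hpos] with p q1 q2 q3
    have h := hK.dist_le_mul _ q1 _ q2
    rw [Real.dist_eq, Real.dist_eq, add_sub_cancel_left, abs_mul, abs_of_pos q3] at h
    rw [le_div_iff₀ q3]
    have := (abs_le.mp h).1
    linarith
  have hup : ∀ᶠ p : ℝ × ℝ in (𝓝[Icc a b] x) ×ˢ (𝓝[>] (0:ℝ)),
      (f (p.1 + p.2 * (xbar - x)) - f p.1) / p.2 ≤ -(κ * (f x - f xbar) / 2) := by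
    filter_upwards [hne', hrpos, htr, hpos, hmem, hgap] with p p1 p2 p3 p4 p5 p6
    have h := hqc p.1 p5 _ ⟨(mul_pos p4 p2).le, p3.le⟩
    rw [← hrepr p p1] at h
    rw [div_le_iff₀ p4]
    have := mul_lt_mul_of_pos_right p6 p4
    linarith
  have hle : clarkeDerivOn f (Icc a b) x (xbar - x) ≤ -(κ * (f x - f xbar) / 2) :=
    limsup_le_of_le (isBoundedUnder_of_eventually_ge hlow).isCoboundedUnder_le hup
  have : 0 < κ * (f x - f xbar) := mul_pos hκ (sub_pos.mpr hlt)
  linarith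

/-- unimodality on an interval.  Let `f : [a,b] → ℝ` be locally
Lipschitz, `xbar ∈ argmin_{[a,b]} f`, and `f` `κ`-quasar-convex with respect to `xbar` for
some `κ ∈ (0,1]`.  Then `f` is unimodal: nonincreasing on `[a, xbar]` and nondecreasing on
`[xbar, b]`; moreover, every Clarke critical point of `f` in `[a,b]` is a global minimizer
of `f` on `[a,b]`. -/
theorem quasarConvex_unimodal (a b : ℝ) (hab : a ≤ b) (f : ℝ → ℝ)
    (hlip : ∀ x ∈ Icc a b, ∃ (K : NNReal) (U : Set ℝ),
      U ∈ 𝓝[Icc a b] x ∧ LipschitzOnWith K f U)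
    (xbar : ℝ) (hxbar : xbar ∈ Icc a b)
    (hmin : ∀ y ∈ Icc a b, f xbar ≤ f y)
    (κ : ℝ) (hκ : κ ∈ Ioc (0:ℝ) 1)
    (hqc : ∀ x ∈ Icc a b, ∀ t ∈ Icc (0:ℝ) 1,
      f (t * xbar + (1 - t) * x) ≤ κ * t * f xbar + (1 - κ * t) * f x) :
    AntitoneOn f (Icc a xbar) ∧ MonotoneOn f (Icc xbar b) ∧
    (∀ x ∈ Icc a b, (0 : ℝ) ∈ clarkeSubdiffOn f (Icc a b) x → ∀ y ∈ Icc a b, f x ≤ f y) := by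
  -- `f` does not increase when moving from `z` to a point between `xbar` and `z`.
  have key : ∀ z ∈ Icc a b, ∀ w, w ∈ segment ℝ xbar z → f w ≤ f z := by
    rintro z hz w ⟨s, t, hs, ht, hst, rfl⟩
    obtain rfl : t = 1 - s := by linarith
    have h := hqc z hz s ⟨hs, by linarith⟩
    have h' : 0 ≤ κ * s * (f z - f xbar) :=
      mul_nonneg (mul_nonneg hκ.1.le hs) (sub_nonneg.mpr (hmin z hz))
    simp only [smul_eq_mul]
    linarith
  refine ⟨?_, ?_, ?_⟩
  · intro x hx y hy hxy
    refine key x ⟨hx.1, hx.2.trans hxbar.2⟩ y ?_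
    rw [segment_symm, segment_eq_Icc hx.2]
    exact ⟨hxy, hy.2⟩
  · intro x hx y hy hxy
    refine key y ⟨hxbar.1.trans hy.1, hy.2⟩ x ?_
    rw [segment_eq_Icc hy.1]
    exact ⟨hx.1, hxy⟩
  · intro x hx hcrit y hy
    refine le_trans (not_lt.mp fun hlt => ?_) (hmin y hy)
    have h := hcrit (xbar - x)
    rw [zero_mul] at h
    exact absurd h (not_le.mpr
      (clarkeDerivOn_lt_zero a b f xbar hxbar κ hκ.1 hqc x hx (hlip x hx) hlt))
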